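/- Let Q be the alternating A₄ quiver with vertices 1, 2, 3, 4 and arrows a : 1 → 2, b : 3 → 2, c : 3 → 4, and let V be a representation of Q given by linear maps A : V_1 → V_2, B : V_3 → V_2, C : V_3 → V_4. Then for every vertex x, dim_K (rkf V)_x = dim_K ( (im A ∩ im B) / (im A ∩ B(ker C)) ) = dim_K ( B⁻¹(im A) / (ker B + ker C) ). -/

import Mathlib

open Submodule

section Defs

variable {K : Type} [Field K]
variable {Q₀ Q₁ : Type} (tl hd : Q₁ → Q₀)
variable (Vx : Q₀ → Type) [∀ x, AddCommGroup (Vx x)] [∀ x, Module K (Vx x)]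
variable (Va : ∀ a : Q₁, Vx (tl a) →ₗ[K] Vx (hd a))

/-- `U` is a subrepresentation of the representation `(Vx, Va)`. -/
def IsSubrep (U : ∀ x, Submodule K (Vx x)) : Prop :=
  ∀ a : Q₁, (U (tl a)).map (Va a) ≤ U (hd a)

/-- `U` is an epimorphic subrepresentation: `V_a(U_{ta}) = U_{ha}` for every arrow. -/
def IsEpiSub (U : ∀ x, Submodule K (Vx x)) : Prop :=
  ∀ a : Q₁, (U (tl a)).map (Va a) = U (hd a)

/-- `N` is a coclosed subrepresentation: it is a subrepresentation and
`V_a⁻¹(N_{ha}) ⊆ N_{ta}` for every arrow. -/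
def IsCoclosedSub (N : ∀ x, Submodule K (Vx x)) : Prop :=
  IsSubrep tl hd Vx Va N ∧ ∀ a : Q₁, (N (hd a)).comap (Va a) ≤ N (tl a)

/-- `Γ(V)`, the sum of all epimorphic subrepresentations. -/
def Gamma (x : Q₀) : Submodule K (Vx x) :=
  ⨆ U : {U : ∀ y, Submodule K (Vx y) // IsEpiSub tl hd Vx Va U}, U.1 x

/-- `Δ(V)`, the intersection of all coclosed subrepresentations. -/
def Delta (x : Q₀) : Submodule K (Vx x) :=
  ⨅ N : {N : ∀ y, Submodule K (Vx y) // IsCoclosedSub tl hd Vx Va N}, N.1 x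

lemma le_gamma {U : ∀ y, Submodule K (Vx y)} (hU : IsEpiSub tl hd Vx Va U) (x : Q₀) :
    U x ≤ Gamma tl hd Vx Va x :=
  le_iSup (fun (W : {U // IsEpiSub tl hd Vx Va U}) => W.1 x) ⟨U, hU⟩

lemma delta_le {N : ∀ y, Submodule K (Vx y)} (hN : IsCoclosedSub tl hd Vx Va N) (x : Q₀) :
    Delta tl hd Vx Va x ≤ N x :=
  iInf_le (fun (W : {N // IsCoclosedSub tl hd Vx Va N}) => W.1 x) ⟨N, hN⟩

lemma gamma_epi : IsEpiSub tl hd Vx Va (Gamma tl hd Vx Va) := by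
  intro a
  apply le_antisymm
  · rw [Gamma, Submodule.map_iSup]
    refine iSup_le fun U => ?_
    rw [U.2 a]
    exact le_gamma tl hd Vx Va U.2 (hd a)
  · refine iSup_le fun U => ?_
    rw [← U.2 a]
    exact Submodule.map_mono (le_gamma tl hd Vx Va U.2 (tl a))

lemma gamma_subrep : IsSubrep tl hd Vx Va (Gamma tl hd Vx Va) :=
  fun a => le_of_eq (gamma_epi tl hd Vx Va a)

lemma delta_subrep : IsSubrep tl hd Vx Va (Delta tl hd Vx Va) := by
  intro a
  have : ∀ N : {N // IsCoclosedSub tl hd Vx Va N},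
      (Delta tl hd Vx Va (tl a)).map (Va a) ≤ N.1 (hd a) :=
    fun N => le_trans (Submodule.map_mono (delta_le tl hd Vx Va N.2 (tl a))) (N.2.1 a)
  exact le_iInf this

/-- `Γ(V) + Δ(V)` pointwise. -/
abbrev GD (x : Q₀) : Submodule K (Vx x) := Gamma tl hd Vx Va x ⊔ Delta tl hd Vx Va x

/-- `Δ(V)`, seen inside `Γ(V) + Δ(V)`. -/
abbrev rkfDen (x : Q₀) : Submodule K (GD tl hd Vx Va x) :=
  (Delta tl hd Vx Va x).comap (GD tl hd Vx Va x).subtype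

/-- The vertex spaces `(Γ(V)_x + Δ(V)_x)/Δ(V)_x` of the global tensor functor. -/
abbrev rkfSpace (x : Q₀) : Type :=
  GD tl hd Vx Va x ⧸ rkfDen tl hd Vx Va x

lemma gd_mapsTo (a : Q₁) : ∀ v ∈ GD tl hd Vx Va (tl a), Va a v ∈ GD tl hd Vx Va (hd a) := by
  intro v hv
  have : (GD tl hd Vx Va (tl a)).map (Va a) ≤ GD tl hd Vx Va (hd a) := by
    rw [Submodule.map_sup]
    exact sup_le_sup (gamma_subrep tl hd Vx Va a) (delta_subrep tl hd Vx Va a)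
  exact this ⟨v, hv, rfl⟩

/-- The arrow maps of the global tensor functor, induced by the `V_a`. -/
def rkfMap (a : Q₁) : rkfSpace tl hd Vx Va (tl a) →ₗ[K] rkfSpace tl hd Vx Va (hd a) :=
  Submodule.liftQ _
    ((rkfDen tl hd Vx Va (hd a)).mkQ ∘ₗ (Va a).restrict (gd_mapsTo tl hd Vx Va a))
    (by
      intro v hv
      simp only [LinearMap.mem_ker, LinearMap.comp_apply, Submodule.mkQ_apply,
        Submodule.Quotient.mk_eq_zero]
      have hv' : (v : Vx (tl a)) ∈ Delta tl hd Vx Va (tl a) := hv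
      show (Va a) (v : Vx (tl a)) ∈ Delta tl hd Vx Va (hd a)
      exact delta_subrep tl hd Vx Va a ⟨(v : Vx (tl a)), hv', rfl⟩)

/-- Isomorphism of quiver representations. -/
def RepIso (Wx : Q₀ → Type) [∀ x, AddCommGroup (Wx x)] [∀ x, Module K (Wx x)]
    (Wa : ∀ a : Q₁, Wx (tl a) →ₗ[K] Wx (hd a)) : Prop :=
  ∃ φ : ∀ x, Vx x ≃ₗ[K] Wx x, ∀ (a : Q₁) (v : Vx (tl a)), φ (hd a) (Va a v) = Wa a (φ (tl a) v)

end Defs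

/-- Vertices of the alternating `A₄` quiver. -/
inductive A4V | v1 | v2 | v3 | v4

/-- Arrows of the alternating `A₄` quiver: `a : 1 → 2`, `b : 3 → 2`, `c : 3 → 4`. -/
inductive A4A | a | b | c

/-- Tails. -/
def A4t : A4A → A4V | .a => .v1 | .b => .v3 | .c => .v3

/-- Heads. -/
def A4h : A4A → A4V | .a => .v2 | .b => .v2 | .c => .v4

section A4

variable {K : Type} [Field K]
variable (V1 V2 V3 V4 : Type)
  [AddCommGroup V1] [AddCommGroup V2] [AddCommGroup V3] [AddCommGroup V4]
  [Module K V1] [Module K V2] [Module K V3] [Module K V4]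

/-- Vertex spaces. -/
def A4Vx : A4V → Type | .v1 => V1 | .v2 => V2 | .v3 => V3 | .v4 => V4

instance : ∀ x, AddCommGroup (A4Vx V1 V2 V3 V4 x)
  | .v1 => ‹_› | .v2 => ‹_› | .v3 => ‹_› | .v4 => ‹_›

instance : ∀ x, Module K (A4Vx V1 V2 V3 V4 x)
  | .v1 => ‹_› | .v2 => ‹_› | .v3 => ‹_› | .v4 => ‹_›

variable (A : V1 →ₗ[K] V2) (B : V3 →ₗ[K] V2) (C : V3 →ₗ[K] V4)

/-- Arrow maps. -/
def A4Va : ∀ ar : A4A, A4Vx V1 V2 V3 V4 (A4t ar) →ₗ[K] A4Vx V1 V2 V3 V4 (A4h ar)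
  | .a => A | .b => B | .c => C

end A4

/-!
`Γ(V)` is itself epimorphic and `Δ(V)` is itself coclosed, so for every arrow `a` the map `V_a`
induces an isomorphism `(rkf V)_{ta} ≃ (rkf V)_{ha}`: surjective because `V_a` maps `Γ(V)_{ta}` onto
`Γ(V)_{ha}`, injective because `V_a⁻¹(Δ(V)_{ha}) ⊆ Δ(V)_{ta}`. As `A₄` is connected, all vertex
spaces of `rkf V` are isomorphic, and the two quotients in the theorem are `rkf V` at the
vertices `2` and `3`, written as `Γ(V)_x / (Γ(V)_x ∩ Δ(V)_x)`.
-/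

section GlobalTensorFunctor

variable {K : Type} [Field K]
variable {Q₀ Q₁ : Type} (tl hd : Q₁ → Q₀)
variable (Vx : Q₀ → Type) [∀ x, AddCommGroup (Vx x)] [∀ x, Module K (Vx x)]
variable (Va : ∀ a : Q₁, Vx (tl a) →ₗ[K] Vx (hd a))

lemma isCoclosedSub_delta : IsCoclosedSub tl hd Vx Va (Delta tl hd Vx Va) :=
  ⟨delta_subrep tl hd Vx Va, fun a =>
    le_iInf fun N => (comap_mono (delta_le tl hd Vx Va N.2 (hd a))).trans (N.2.2 a)⟩

lemma isGreatest_gamma : IsGreatest {U | IsEpiSub tl hd Vx Va U} (Gamma tl hd Vx Va) :=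
  ⟨gamma_epi tl hd Vx Va, fun _ hU => le_gamma tl hd Vx Va hU⟩

lemma isLeast_delta : IsLeast {N | IsCoclosedSub tl hd Vx Va N} (Delta tl hd Vx Va) :=
  ⟨isCoclosedSub_delta tl hd Vx Va, fun _ hN => delta_le tl hd Vx Va hN⟩

lemma rkfMap_injective (a : Q₁) : Function.Injective (rkfMap tl hd Vx Va a) := by
  refine (injective_iff_map_eq_zero _).2 fun q hq => ?_
  obtain ⟨v, rfl⟩ := mkQ_surjective _ q
  have hv : Va a v ∈ Delta tl hd Vx Va (hd a) :=
    (Submodule.Quotient.mk_eq_zero (rkfDen tl hd Vx Va (hd a))).1 hq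
  exact (Submodule.Quotient.mk_eq_zero _).2 ((isCoclosedSub_delta tl hd Vx Va).2 a hv)

lemma rkfMap_surjective (a : Q₁) : Function.Surjective (rkfMap tl hd Vx Va a) := by
  intro q
  obtain ⟨⟨w, hw⟩, rfl⟩ := mkQ_surjective _ q
  obtain ⟨g, hg, d, hΔ, rfl⟩ := mem_sup.1 hw
  obtain ⟨u, hu, rfl⟩ : g ∈ (Gamma tl hd Vx Va (tl a)).map (Va a) :=
    (gamma_epi tl hd Vx Va a).ge hg
  refine ⟨mkQ _ ⟨u, mem_sup_left hu⟩, (Submodule.Quotient.eq _).2 ?_⟩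
  change Va a u - (Va a u + d) ∈ Delta tl hd Vx Va (hd a)
  rwa [sub_add_cancel_left, neg_mem_iff]

/-- The isomorphism `(rkf V)_{ta} ≃ (rkf V)_{ha}` induced by `V_a`. -/
noncomputable def rkfEquiv (a : Q₁) :
    rkfSpace tl hd Vx Va (tl a) ≃ₗ[K] rkfSpace tl hd Vx Va (hd a) :=
  LinearEquiv.ofBijective (rkfMap tl hd Vx Va a)
    ⟨rkfMap_injective tl hd Vx Va a, rkfMap_surjective tl hd Vx Va a⟩

lemma nonempty_rkfSpace_equiv_quotient {x : Q₀} {G N : Submodule K (Vx x)}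
    (hG : Gamma tl hd Vx Va x = G) (hN : G ⊓ Delta tl hd Vx Va x = G ⊓ N) :
    Nonempty (rkfSpace tl hd Vx Va x ≃ₗ[K] G ⧸ N.comap G.subtype) := by
  subst hG
  set G := Gamma tl hd Vx Va x
  have hcomap : G.comap G.subtype ⊓ (Delta tl hd Vx Va x).comap G.subtype =
      N.comap G.subtype := by
    rw [← comap_inf, hN, comap_inf, comap_subtype_self, top_inf_eq]
  exact ⟨(LinearMap.quotientInfEquivSupQuotient G _).symm ≪≫ₗ quotEquivOfEq _ _ hcomap⟩

end GlobalTensorFunctor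

section AlternatingA4

variable {K : Type} [Field K]
variable {V1 V2 V3 V4 : Type}
  [AddCommGroup V1] [AddCommGroup V2] [AddCommGroup V3] [AddCommGroup V4]
  [Module K V1] [Module K V2] [Module K V3] [Module K V4]
variable (A : V1 →ₗ[K] V2) (B : V3 →ₗ[K] V2) (C : V3 →ₗ[K] V4)

/-- The maximal epimorphic subrepresentation of `V₁ → V₂ ← V₃ → V₄`, in terms of images and
preimages. -/
def a4Gamma : ∀ x, Submodule K (A4Vx V1 V2 V3 V4 x)
  | .v1 => (LinearMap.range B).comap A
  | .v2 => (LinearMap.range A ⊓ LinearMap.range B : Submodule K V2)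
  | .v3 => (LinearMap.range A).comap B
  | .v4 => ((LinearMap.range A).comap B).map C

/-- The minimal coclosed subrepresentation of `V₁ → V₂ ← V₃ → V₄`, in terms of kernels and their
images and preimages. -/
def a4Delta : ∀ x, Submodule K (A4Vx V1 V2 V3 V4 x)
  | .v1 => ((LinearMap.ker C).map B).comap A
  | .v2 => (LinearMap.ker C).map B
  | .v3 => (LinearMap.ker B ⊔ LinearMap.ker C : Submodule K V3)
  | .v4 => (LinearMap.ker B).map C

lemma isEpiSub_a4Gamma :
    IsEpiSub A4t A4h (A4Vx V1 V2 V3 V4) (A4Va V1 V2 V3 V4 A B C) (a4Gamma A B C)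
  | .a => map_comap_eq A (LinearMap.range B)
  | .b => (map_comap_eq B (LinearMap.range A)).trans (inf_comm _ _)
  | .c => rfl

lemma isCoclosedSub_a4Delta :
    IsCoclosedSub A4t A4h (A4Vx V1 V2 V3 V4) (A4Va V1 V2 V3 V4 A B C) (a4Delta A B C) := by
  have hB : ((LinearMap.ker C).map B).comap B = LinearMap.ker B ⊔ LinearMap.ker C :=
    (comap_map_eq B _).trans (sup_comm _ _)
  have hC : ((LinearMap.ker B).map C).comap C = LinearMap.ker B ⊔ LinearMap.ker C :=
    comap_map_eq C _
  constructor <;> rintro (_ | _ | _)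
  · exact map_comap_le A ((LinearMap.ker C).map B)
  · exact map_le_iff_le_comap.2 hB.ge
  · exact map_le_iff_le_comap.2 hC.ge
  · exact le_refl (((LinearMap.ker C).map B).comap A)
  · exact hB.le
  · exact hC.le

variable {A B C} in
lemma IsEpiSub.le_a4Gamma {U : ∀ x, Submodule K (A4Vx V1 V2 V3 V4 x)}
    (hU : IsEpiSub A4t A4h (A4Vx V1 V2 V3 V4) (A4Va V1 V2 V3 V4 A B C) U) :
    U ≤ a4Gamma A B C := by
  have ha : (U .v1).map A = U .v2 := hU .a
  have hb : (U .v3).map B = U .v2 := hU .b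
  have hc : (U .v3).map C = U .v4 := hU .c
  have h_rangeA : U .v2 ≤ LinearMap.range A := ha ▸ LinearMap.map_le_range
  have h_rangeB : U .v2 ≤ LinearMap.range B := hb ▸ LinearMap.map_le_range
  have h_v3 : U .v3 ≤ (LinearMap.range A).comap B :=
    map_le_iff_le_comap.1 (hb.le.trans h_rangeA)
  rintro (_ | _ | _ | _)
  · exact map_le_iff_le_comap.1 (ha.le.trans h_rangeB)
  · exact le_inf h_rangeA h_rangeB
  · exact h_v3
  · exact hc.ge.trans (map_mono h_v3)

variable {A B C} in
lemma IsCoclosedSub.a4Delta_le {N : ∀ x, Submodule K (A4Vx V1 V2 V3 V4 x)}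
    (hN : IsCoclosedSub A4t A4h (A4Vx V1 V2 V3 V4) (A4Va V1 V2 V3 V4 A B C) N) :
    a4Delta A B C ≤ N := by
  obtain ⟨hsub, hcoclosed⟩ := hN
  have h_kerB : LinearMap.ker B ≤ N .v3 := (LinearMap.ker_le_comap (f := B)).trans (hcoclosed .b)
  have h_kerC : LinearMap.ker C ≤ N .v3 := (LinearMap.ker_le_comap (f := C)).trans (hcoclosed .c)
  have h_v2 : (LinearMap.ker C).map B ≤ N .v2 := (map_mono h_kerC).trans (hsub .b)
  rintro (_ | _ | _ | _)
  · exact (comap_mono h_v2).trans (hcoclosed .a)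
  · exact h_v2
  · exact sup_le h_kerB h_kerC
  · exact (map_mono h_kerB).trans (hsub .c)

lemma gamma_eq_a4Gamma :
    Gamma A4t A4h (A4Vx V1 V2 V3 V4) (A4Va V1 V2 V3 V4 A B C) = a4Gamma A B C :=
  (isGreatest_gamma A4t A4h _ _).unique
    ⟨isEpiSub_a4Gamma A B C, fun _ => IsEpiSub.le_a4Gamma⟩

lemma delta_eq_a4Delta :
    Delta A4t A4h (A4Vx V1 V2 V3 V4) (A4Va V1 V2 V3 V4 A B C) = a4Delta A B C :=
  (isLeast_delta A4t A4h _ _).unique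
    ⟨isCoclosedSub_a4Delta A B C, fun _ => IsCoclosedSub.a4Delta_le⟩

/-- Every vertex space of `rkf V` is isomorphic to the one at the vertex `3`, by composing arrow
isomorphisms along the underlying path of `A₄`. -/
noncomputable def a4RkfEquivV3 : ∀ x,
    rkfSpace A4t A4h (A4Vx V1 V2 V3 V4) (A4Va V1 V2 V3 V4 A B C) x ≃ₗ[K]
      rkfSpace A4t A4h (A4Vx V1 V2 V3 V4) (A4Va V1 V2 V3 V4 A B C) .v3
  | .v1 => rkfEquiv A4t A4h _ _ A4A.a ≪≫ₗ (rkfEquiv A4t A4h _ _ A4A.b).symm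
  | .v2 => (rkfEquiv A4t A4h _ _ A4A.b).symm
  | .v3 => LinearEquiv.refl K _
  | .v4 => (rkfEquiv A4t A4h _ _ A4A.c).symm

lemma nonempty_a4Rkf_v2_equiv :
    Nonempty (rkfSpace A4t A4h (A4Vx V1 V2 V3 V4) (A4Va V1 V2 V3 V4 A B C) .v2 ≃ₗ[K]
      ↥(LinearMap.range A ⊓ LinearMap.range B) ⧸
        ((LinearMap.range A ⊓ (LinearMap.ker C).map B).comap
          (LinearMap.range A ⊓ LinearMap.range B).subtype)) := by
  refine nonempty_rkfSpace_equiv_quotient A4t A4h _ _ (congrFun (gamma_eq_a4Gamma A B C) .v2) ?_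
  rw [delta_eq_a4Delta]
  exact (inf_assoc _ _ _).trans (inf_inf_distrib_left _ _ _)

lemma nonempty_a4Rkf_v3_equiv :
    Nonempty (rkfSpace A4t A4h (A4Vx V1 V2 V3 V4) (A4Va V1 V2 V3 V4 A B C) .v3 ≃ₗ[K]
      ↥((LinearMap.range A).comap B) ⧸
        ((LinearMap.ker B ⊔ LinearMap.ker C).comap ((LinearMap.range A).comap B).subtype)) := by
  refine nonempty_rkfSpace_equiv_quotient A4t A4h _ _ (congrFun (gamma_eq_a4Gamma A B C) .v3) ?_
  rw [delta_eq_a4Delta]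
  rfl

theorem stmt_17_general (x : A4V) :
    Nonempty (rkfSpace A4t A4h (A4Vx V1 V2 V3 V4) (A4Va V1 V2 V3 V4 A B C) x ≃ₗ[K]
      ↥(LinearMap.range A ⊓ LinearMap.range B) ⧸
        ((LinearMap.range A ⊓ (LinearMap.ker C).map B).comap
          (LinearMap.range A ⊓ LinearMap.range B).subtype)) ∧
    Nonempty (rkfSpace A4t A4h (A4Vx V1 V2 V3 V4) (A4Va V1 V2 V3 V4 A B C) x ≃ₗ[K]
      ↥((LinearMap.range A).comap B) ⧸
        ((LinearMap.ker B ⊔ LinearMap.ker C).comap ((LinearMap.range A).comap B).subtype)) := by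
  obtain ⟨e2⟩ := nonempty_a4Rkf_v2_equiv A B C
  obtain ⟨e3⟩ := nonempty_a4Rkf_v3_equiv A B C
  let toV3 := a4RkfEquivV3 A B C
  exact ⟨⟨toV3 x ≪≫ₗ (toV3 .v2).symm ≪≫ₗ e2⟩, ⟨toV3 x ≪≫ₗ e3⟩⟩

end AlternatingA4

/-- for the alternating `A₄` quiver `1 → 2 ← 3 → 4` with representation
`(V₁, V₂, V₃, V₄; A, B, C)`, for every vertex `x`,
`dim (rkf V)_x = dim ((im A ∩ im B)/(im A ∩ B(ker C))) = dim (B⁻¹(im A)/(ker B + ker C))`. -/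
theorem stmt_17 {K : Type} [Field K]
    (V1 V2 V3 V4 : Type)
    [AddCommGroup V1] [AddCommGroup V2] [AddCommGroup V3] [AddCommGroup V4]
    [Module K V1] [Module K V2] [Module K V3] [Module K V4]
    [FiniteDimensional K V1] [FiniteDimensional K V2] [FiniteDimensional K V3]
    [FiniteDimensional K V4]
    (A : V1 →ₗ[K] V2) (B : V3 →ₗ[K] V2) (C : V3 →ₗ[K] V4) :
    ∀ x : A4V,
      Module.finrank K (rkfSpace A4t A4h (A4Vx V1 V2 V3 V4) (A4Va V1 V2 V3 V4 A B C) x)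
        = Module.finrank K
          (↥(LinearMap.range A ⊓ LinearMap.range B) ⧸
            ((LinearMap.range A ⊓ (LinearMap.ker C).map B).comap
              (LinearMap.range A ⊓ LinearMap.range B).subtype)) ∧
      Module.finrank K (rkfSpace A4t A4h (A4Vx V1 V2 V3 V4) (A4Va V1 V2 V3 V4 A B C) x)
        = Module.finrank K
          (↥((LinearMap.range A).comap B) ⧸
            ((LinearMap.ker B ⊔ LinearMap.ker C).comap
              ((LinearMap.range A).comap B).subtype)) := by
  intro x
  obtain ⟨⟨e2⟩, ⟨e3⟩⟩ := stmt_17_general A B C x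
  exact ⟨e2.finrank_eq, e3.finrank_eq⟩
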